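/- Let (X,A,T,μ) be an invertible measure-preserving system on a Lebesgue probability space and let F be a generating sub-σ-algebra of A, i.e., the σ-algebra generated by ⋁_{n∈ℤ} T^{-n}F equals A mod μ. Then the Pinsker σ-algebra Π_μ is contained in F^- = ⋁_{n≥1} T^{-n}F (mod μ). -/

import Mathlib

open MeasureTheory Filter Topology Set
open scoped symmDiff Classical ENNReal NNReal

section Defs

variable {X : Type*}

/-- The pair `(x, y)` is (positively) asymptotic for `T`. -/
def IsAsymptoticPair [PseudoMetricSpace X] (T : X → X) (x y : X) : Prop :=
  Tendsto (fun n : ℕ => dist (T^[n] x) (T^[n] y)) atTop (𝓝 0)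

/-- Shannon entropy of the finite measurable partition of `X` given by the fibers of a
map `p` into a finite type. -/
noncomputable def partEntropy [MeasurableSpace X] (μ : Measure X) {ι : Type*} [Fintype ι]
    (p : X → ι) : ℝ :=
  ∑ i : ι, Real.negMulLog (μ (p ⁻¹' {i})).toReal

/-- Conditional Shannon entropy `H(P | F)` of the finite partition given by the fibers
of `p` with respect to the sub-σ-algebra `F`:
`H(P|F) = ∑_{A ∈ P} ∫ -E(1_A|F) log E(1_A|F) dμ`. -/
noncomputable def condPartEntropy [MeasurableSpace X] (μ : Measure X)
    (F : MeasurableSpace X) {ι : Type*} [Fintype ι] (p : X → ι) : ℝ :=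
  ∑ i : ι, ∫ x, Real.negMulLog ((μ[(p ⁻¹' {i}).indicator (fun _ => (1 : ℝ)) | F]) x) ∂μ

/-- The σ-algebra `σ(P^-)` generated by the partitions `T^{-n}P`, `n ≥ 1`
(the "past" of the partition given by the fibers of `p`). -/
def partPast (T : X → X) {ι : Type*} (p : X → ι) : MeasurableSpace X :=
  ⨆ n : ℕ, MeasurableSpace.comap (fun x => p (T^[n + 1] x)) ⊤

/-- The σ-algebra `σ(P^T)` generated by the partitions `T^{-n}P`, `n ∈ ℤ`, where `S = T⁻¹`. -/
def partHull (T S : X → X) {ι : Type*} (p : X → ι) : MeasurableSpace X :=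
  ⨆ n : ℕ,
    MeasurableSpace.comap (fun x => p (T^[n] x)) ⊤ ⊔
      MeasurableSpace.comap (fun x => p (S^[n] x)) ⊤

/-- Kolmogorov–Sinai entropy of a finite partition: `h_μ(P, T) = H(P | P^-)`. -/
noncomputable def partKS [MeasurableSpace X] (μ : Measure X) (T : X → X) {ι : Type*}
    [Fintype ι] (p : X → ι) : ℝ :=
  condPartEntropy μ (partPast T p) p

/-- Kolmogorov–Sinai (measure-theoretic) entropy `h_μ(X, T)` of the system:
the supremum over all finite measurable partitions `P` of `h_μ(P, T)`. -/
noncomputable def ksEntropy [MeasurableSpace X] (μ : Measure X) (T : X → X) : ℝ≥0∞ :=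
  ⨆ (k : ℕ) (p : X → Fin k) (_ : Measurable p), ENNReal.ofReal (partKS μ T p)

/-- The Pinsker σ-algebra `Π_μ`: the σ-algebra generated by all finite measurable
partitions with zero Kolmogorov–Sinai entropy. -/
def pinskerAlg [MeasurableSpace X] (μ : Measure X) (T : X → X) : MeasurableSpace X :=
  ⨆ (k : ℕ) (p : X → Fin k) (_ : Measurable p) (_ : partKS μ T p = 0),
    MeasurableSpace.comap p ⊤

/-- Minimal cardinality of a subcover of `⋁_{i=0}^{n-1} T^{-i} C`, where `C` is a
finite cover of `X`. -/
noncomputable def coverNum (T : X → X) {k : ℕ} (C : Fin k → Set X) (n : ℕ) : ℕ :=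
  sInf {m : ℕ | ∃ f : Fin m → Fin n → Fin k,
    (⋃ j : Fin m, ⋂ i : Fin n, T^[(i : ℕ)] ⁻¹' C (f j i)) = Set.univ}

/-- Topological entropy of a finite cover `C`:
`h(C, T) = inf_n (1/n) log N(⋁_{i=0}^{n-1} T^{-i} C) = lim_n (1/n) log N(...)`. -/
noncomputable def coverEntropyOf (T : X → X) {k : ℕ} (C : Fin k → Set X) : ℝ :=
  ⨅ n : ℕ, Real.log (coverNum T C (n + 1)) / (n + 1)

/-- `(x, y)` is a topological entropy pair: `x ≠ y` and every two-set open cover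
`{Uᶜ, Vᶜ}`, where `U` and `V` are disjoint closed neighbourhoods of `x` and `y`,
has positive topological entropy. -/
def IsEntropyPair [TopologicalSpace X] (T : X → X) (x y : X) : Prop :=
  x ≠ y ∧ ∀ U V : Set X, IsClosed U → IsClosed V → U ∈ 𝓝 x → V ∈ 𝓝 y → Disjoint U V →
    0 < coverEntropyOf T ![Uᶜ, Vᶜ]

/-- `(x, y)` is an entropy pair for the invariant measure `μ`: `x ≠ y` and every two-set
Borel partition `(A, Aᶜ)` with `x ∈ interior A` and `y ∈ interior Aᶜ` has positive
entropy with respect to `T` and `μ`. -/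
def IsMuEntropyPair [TopologicalSpace X] [MeasurableSpace X] (T : X → X) (μ : Measure X)
    (x y : X) : Prop :=
  x ≠ y ∧ ∀ A : Set X, MeasurableSet A → x ∈ interior A → y ∈ interior Aᶜ →
    0 < partKS μ T (fun z => if z ∈ A then (0 : Fin 2) else 1)

/-- `ν` is the relatively independent square `μ ⊠_G μ` of `μ` over the sub-σ-algebra `G`:
it is determined by `ν(A × B) = ∫ E(1_A|G) · E(1_B|G) dμ` for all Borel sets `A`, `B`. -/
def IsCondSquare (G : MeasurableSpace X) [m0 : MeasurableSpace X] (μ : Measure X)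
    (ν : Measure (X × X)) : Prop :=
  ∀ A B : Set X, MeasurableSet[m0] A → MeasurableSet[m0] B →
    ν (A ×ˢ B) = ENNReal.ofReal
      (∫ x, (μ[A.indicator (fun _ => (1 : ℝ)) | G]) x *
            (μ[B.indicator (fun _ => (1 : ℝ)) | G]) x ∂μ)

/-- The σ-algebra `m₁` is contained in `m₂` modulo `μ`-null sets. -/
def SubModNull [MeasurableSpace X] (μ : Measure X) (m₁ m₂ : MeasurableSpace X) : Prop :=
  ∀ A : Set X, MeasurableSet[m₁] A → ∃ B : Set X, MeasurableSet[m₂] B ∧ μ (A ∆ B) = 0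

end Defs

section Defs2

variable {X : Type*}

/-- The σ-algebra `F^- = ⋁_{n ≥ 1} T^{-n} F`. -/
def pastAlg (T : X → X) (F : MeasurableSpace X) : MeasurableSpace X :=
  ⨆ n : ℕ, MeasurableSpace.comap (T^[n + 1]) F

/-- The σ-algebra `F^T = ⋁_{n ∈ ℤ} T^{-n} F`, where `S = T⁻¹`. -/
def hullAlg (T S : X → X) (F : MeasurableSpace X) : MeasurableSpace X :=
  ⨆ n : ℕ, MeasurableSpace.comap (T^[n]) F ⊔ MeasurableSpace.comap (S^[n]) F

/-- `P` is (the σ-algebra of) an *excellent* measurable partition for `(X, μ, T)` (here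
`S = T⁻¹`): it is generating (`σ(P^T) = 𝒜` mod `μ`) and it is generated by an increasing
sequence of finite measurable partitions `Pₙ ↑ P` with `H(Pₙ|Pₙ⁻) − H(Pₙ|P⁻) → 0`. -/
def IsExcellentPartition (P : MeasurableSpace X) [m0 : MeasurableSpace X] (μ : Measure X)
    (T S : X → X) : Prop :=
  P ≤ m0 ∧ SubModNull μ m0 (hullAlg T S P) ∧
  ∃ (m : ℕ → ℕ) (Q : ∀ n : ℕ, X → Fin (m n)),
    (∀ n, Measurable (Q n)) ∧
    Monotone (fun n => MeasurableSpace.comap (Q n) (⊤ : MeasurableSpace (Fin (m n)))) ∧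
    (⨆ n : ℕ, MeasurableSpace.comap (Q n) (⊤ : MeasurableSpace (Fin (m n)))) = P ∧
    Tendsto (fun n => condPartEntropy μ (partPast T (Q n)) (Q n) -
      condPartEntropy μ (pastAlg T P) (Q n)) atTop (𝓝 0)

end Defs2

/-! Let `p` be a finite partition with `h(p, T) = 0`. Entropy `h(·, T)` is monotone, so for every
finite partition `q` the chain rule gives
`H(q | q⁻) ≤ h(p ∨ q, T) = H(p | (p ∨ q)⁻) + H(q | p ∨ (p ∨ q)⁻) ≤ 0 + H(q | T⁻ᵏp ∨ q⁻)`.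
Conditionally on `q⁻`, then, `q` carries no information on `T⁻ᵏp`, that is
`H(T⁻ᵏp | q⁻) = H(T⁻ᵏp | q ∨ q⁻)`. By invariance and `q ∨ q⁻ = T(q⁻)` this reads
`H(p | Tᵏq⁻) = H(p | Tᵏ⁺¹q⁻)`, hence `H(p | q⁻) = H(p | Tᵏq⁻)` for all `k`.

Only countably many sets of `F` are needed to approximate `p` inside `⋁ₖ TᵏF⁻`. They generate a
σ-algebra `G ≤ F` exhausted by finite partitions `q`, so the equality passes to the limit:
`H(p | F⁻) ≤ H(p | G⁻) = H(p | TᵏG⁻)`. As `k → ∞` the right-hand side tends to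
`H(p | ⋁ₖ TᵏG⁻) = 0`, so `p` is measurable with respect to `F⁻` up to null sets.
-/

open scoped ProbabilityTheory

/-- The σ-algebra of the partition into the fibres of `p`. The codomain carries `⊤`, so for
countably many fibres this is the σ-algebra that they generate. -/
local notation "σ(" p ")" => MeasurableSpace.comap p ⊤

section SigmaAlgebra

variable {X α β : Type*} {G : MeasurableSpace X}

lemma comap_top_le_iff [Countable α] {p : X → α} :
    σ(p) ≤ G ↔ ∀ i, MeasurableSet[G] (p ⁻¹' {i}) := by
  let _ : MeasurableSpace α := ⊤
  exact ⟨fun h i => h _ ⟨{i}, trivial, rfl⟩, fun h => (measurable_to_countable' h).comap_le⟩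

lemma comap_top_comp_le (p : X → α) (f : α → β) : σ(fun x => f (p x)) ≤ σ(p) := by
  rw [← Function.comp_def f p, ← MeasurableSpace.comap_comp]
  exact MeasurableSpace.comap_mono le_top

lemma comap_top_pair [Countable α] [Countable β] (p : X → α) (q : X → β) :
    σ(fun x => (p x, q x)) = σ(p) ⊔ σ(q) := by
  let _ : MeasurableSpace α := ⊤
  let _ : MeasurableSpace β := ⊤
  have htop : (⊤ : MeasurableSpace (α × β)) = Prod.instMeasurableSpace :=
    (eq_top_iff.mpr fun _ _ => .of_discrete).symm
  rw [htop]
  exact MeasurableSpace.comap_prodMk p q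

lemma comap_top_tuple {ι : Type*} [Finite ι] [Countable α] (p : ι → X → α) :
    σ(fun x i => p i x) = ⨆ i, σ(p i) := by
  let _ : MeasurableSpace α := ⊤
  have htop : (⊤ : MeasurableSpace (ι → α)) = MeasurableSpace.pi :=
    (eq_top_iff.mpr fun _ _ => .of_discrete).symm
  rw [htop, MeasurableSpace.pi, MeasurableSpace.comap_iSup]
  simp only [MeasurableSpace.comap_comp]
  rfl

lemma exists_inter_eq_of_measurableSet_sup_comap_top {q : X → β} {D : Set X}
    (hD : MeasurableSet[σ(q) ⊔ G] D) (j : β) :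
    ∃ C, MeasurableSet[G] C ∧ q ⁻¹' {j} ∩ D = q ⁻¹' {j} ∩ C := by
  let i : (q ⁻¹' {j} : Set X) → X := Subtype.val
  have restrict_le : MeasurableSpace.comap i (σ(q) ⊔ G) ≤ MeasurableSpace.comap i G := by
    have hconst : q ∘ i = fun _ => j := funext fun x => x.2
    rw [MeasurableSpace.comap_sup, MeasurableSpace.comap_comp, hconst,
      MeasurableSpace.comap_const, bot_sup_eq]
  obtain ⟨C, hC, hCD⟩ := restrict_le _ ⟨D, hD, rfl⟩
  exact ⟨C, hC, (Subtype.preimage_val_eq_preimage_val_iff _ _ _).mp hCD.symm⟩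

lemma subModNull_iff_le {m₁ m₂ : MeasurableSpace X} [MeasurableSpace X] {μ : Measure X} :
    SubModNull μ m₁ m₂ ↔ m₁ ≤ eventuallyMeasurableSpace m₂ (ae μ) := by
  simp only [SubModNull, measure_symmDiff_eq_zero_iff]
  rfl

lemma exists_iSup_comap_top_eq_generateFrom {X : Type*} {𝒞 : Set (Set X)} (h𝒞 : 𝒞.Countable) :
    ∃ z : ℕ → X → Prop, ⨆ i, σ(z i) = MeasurableSpace.generateFrom 𝒞 := by
  obtain ⟨C, hC⟩ := (h𝒞.insert ∅).exists_eq_range (insert_nonempty _ _)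
  refine ⟨fun i x => x ∈ C i, ?_⟩
  rw [← MeasurableSpace.generateFrom_insert_empty, hC, ← iUnion_singleton_eq_range,
    ← MeasurableSpace.iSup_generateFrom]
  simp only [MeasurableSpace.generateFrom_singleton]

lemma exists_countable_measurableSet_iSup_comap {ι X Y : Type*} {F : MeasurableSpace Y}
    {f : ι → X → Y} {B : Set X} (hB : MeasurableSet[⨆ i, MeasurableSpace.comap (f i) F] B) :
    ∃ 𝒞 : Set (Set Y), 𝒞.Countable ∧ MeasurableSpace.generateFrom 𝒞 ≤ F ∧
      MeasurableSet[⨆ i, MeasurableSpace.comap (f i) (MeasurableSpace.generateFrom 𝒞)] B := by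
  have mono : ∀ {𝒞 𝒞' : Set (Set Y)}, 𝒞 ⊆ 𝒞' →
      ⨆ i, MeasurableSpace.comap (f i) (MeasurableSpace.generateFrom 𝒞) ≤
        ⨆ i, MeasurableSpace.comap (f i) (MeasurableSpace.generateFrom 𝒞') := fun h =>
    iSup_mono fun i => MeasurableSpace.comap_mono (MeasurableSpace.generateFrom_mono h)
  rw [MeasurableSpace.measurableSet_iSup] at hB
  induction hB with
  | basic B hB =>
    obtain ⟨i, C, hC, rfl⟩ := hB
    exact ⟨{C}, countable_singleton C,
      MeasurableSpace.generateFrom_le fun _ h => mem_singleton_iff.mp h ▸ hC,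
      le_iSup (fun i => MeasurableSpace.comap (f i) (MeasurableSpace.generateFrom {C})) i _
        ⟨C, MeasurableSpace.measurableSet_generateFrom rfl, rfl⟩⟩
  | empty => exact ⟨∅, countable_empty, MeasurableSpace.generateFrom_le fun _ h => h.elim,
      MeasurableSpace.measurableSet_empty _⟩
  | compl B _ ih =>
    obtain ⟨𝒞, h𝒞, hle, hB⟩ := ih
    exact ⟨𝒞, h𝒞, hle, hB.compl⟩
  | iUnion B _ ih =>
    choose 𝒞 h𝒞 hle hB using ih
    refine ⟨⋃ n, 𝒞 n, countable_iUnion h𝒞, ?_, .iUnion fun n =>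
      mono (subset_iUnion 𝒞 n) _ (hB n)⟩
    rw [← MeasurableSpace.iSup_generateFrom]
    exact iSup_le hle

lemma exists_countable_subModNull_iSup_comap {ι X Y α : Type*} {F : MeasurableSpace Y}
    [MeasurableSpace X] {μ : Measure X} [Countable α] {f : ι → X → Y} {p : X → α}
    (hp : SubModNull μ σ(p) (⨆ i, MeasurableSpace.comap (f i) F)) :
    ∃ 𝒞 : Set (Set Y), 𝒞.Countable ∧ MeasurableSpace.generateFrom 𝒞 ≤ F ∧
      SubModNull μ σ(p)
        (⨆ i, MeasurableSpace.comap (f i) (MeasurableSpace.generateFrom 𝒞)) := by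
  choose B hB hpB using fun j => hp (p ⁻¹' {j}) ⟨{j}, trivial, rfl⟩
  choose 𝒞 h𝒞 hle hB𝒞 using fun j => exists_countable_measurableSet_iSup_comap (hB j)
  refine ⟨⋃ j, 𝒞 j, countable_iUnion h𝒞, ?_, ?_⟩
  · rw [← MeasurableSpace.iSup_generateFrom]
    exact iSup_le hle
  · have hsub : ∀ j, MeasurableSpace.generateFrom (𝒞 j) ≤
        MeasurableSpace.generateFrom (⋃ j, 𝒞 j) := fun j =>
      MeasurableSpace.generateFrom_mono (subset_iUnion 𝒞 j)
    rw [subModNull_iff_le, comap_top_le_iff]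
    exact fun j => ⟨B j, iSup_mono (fun i => MeasurableSpace.comap_mono (hsub j)) _ (hB𝒞 j),
      measure_symmDiff_eq_zero_iff.mp (hpB j)⟩

end SigmaAlgebra

section CondProb

variable {X : Type*} {G H : MeasurableSpace X} [m0 : MeasurableSpace X] {μ : Measure X}
  [IsFiniteMeasure μ] {A B C : Set X} {φ : ℝ → ℝ}

lemma integrable_indicator_one (hA : MeasurableSet A) :
    Integrable (A.indicator fun _ => (1 : ℝ)) μ :=
  (integrable_const 1).indicator hA

lemma integrable_comp_of_mem_Icc {f : X → ℝ} (hφ : Continuous φ) (hf : AEStronglyMeasurable f μ)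
    (hf01 : ∀ᵐ x ∂μ, f x ∈ Icc 0 1) : Integrable (fun x => φ (f x)) μ := by
  obtain ⟨K, hK⟩ := isCompact_Icc.exists_bound_of_continuousOn (hφ.continuousOn (s := Icc 0 1))
  exact .of_bound (hφ.comp_aestronglyMeasurable hf) K (hf01.mono fun x hx => hK _ hx)

lemma condProb_mem_Icc (hG : G ≤ m0) (hA : MeasurableSet A) :
    ∀ᵐ x ∂μ, (μ⟦A | G⟧) x ∈ Icc (0 : ℝ) 1 :=
  (convex_Icc 0 1).condExp_mem hG (integrable_indicator_one hA) isClosed_Icc <|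
    ae_of_all _ fun x => by by_cases hx : x ∈ A <;> simp [hx]

lemma integrable_comp_condProb (hφ : Continuous φ) (hG : G ≤ m0) (hA : MeasurableSet A) :
    Integrable (fun x => φ ((μ⟦A | G⟧) x)) μ :=
  integrable_comp_of_mem_Icc hφ integrable_condExp.aestronglyMeasurable (condProb_mem_Icc hG hA)

lemma condProb_mono (hA : MeasurableSet A) (hB : MeasurableSet B) (hAB : A ⊆ B) :
    μ⟦A | G⟧ ≤ᵐ[μ] μ⟦B | G⟧ :=
  condExp_mono (integrable_indicator_one hA) (integrable_indicator_one hB) <|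
    ae_of_all _ (indicator_le_indicator_of_subset hAB fun _ => zero_le_one)

lemma setIntegral_inter_eq_setIntegral_condProb_mul {g : X → ℝ} (hG : G ≤ m0)
    (hB : MeasurableSet B) (hC : MeasurableSet[G] C) (hg : StronglyMeasurable[G] g)
    (hgi : Integrable g μ) :
    ∫ x in C ∩ B, g x ∂μ = ∫ x in C, (μ⟦B | G⟧) x * g x ∂μ := by
  have hmul : B.indicator g = (B.indicator fun _ => (1 : ℝ)) * g := by
    ext x; by_cases hx : x ∈ B <;> simp [hx]
  have hint : Integrable ((B.indicator fun _ => (1 : ℝ)) * g) μ := hmul ▸ hgi.indicator hB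
  calc ∫ x in C ∩ B, g x ∂μ
      = ∫ x in C, ((B.indicator fun _ => (1 : ℝ)) * g) x ∂μ := by
        rw [← hmul, setIntegral_indicator hB]
    _ = ∫ x in C, (μ[(B.indicator fun _ => (1 : ℝ)) * g | G]) x ∂μ :=
        (setIntegral_condExp hG hint hC).symm
    _ = ∫ x in C, (μ⟦B | G⟧) x * g x ∂μ :=
        integral_congr_ae <| ae_restrict_of_ae <|
          condExp_mul_of_stronglyMeasurable_right hg hint (integrable_indicator_one hB)

lemma condProb_inter_div_mem_Icc (hG : G ≤ m0) (hA : MeasurableSet A) (hB : MeasurableSet B) :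
    ∀ᵐ x ∂μ, (μ⟦A ∩ B | G⟧) x / (μ⟦B | G⟧) x ∈ Icc (0 : ℝ) 1 := by
  filter_upwards [condProb_mem_Icc hG (hA.inter hB), condProb_mem_Icc hG hB,
    condProb_mono (hA.inter hB) hB inter_subset_right] with x hAB hB hle
  exact ⟨div_nonneg hAB.1 hB.1, div_le_one_of_le₀ hle hB.1⟩

lemma condProb_inter_eq_zero (hG : G ≤ m0) (hA : MeasurableSet A) (hB : MeasurableSet B) :
    ∀ᵐ x ∂μ, (μ⟦B | G⟧) x = 0 → (μ⟦A ∩ B | G⟧) x = 0 := by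
  filter_upwards [condProb_mem_Icc hG (hA.inter hB),
    condProb_mono (hA.inter hB) hB inter_subset_right] with x hAB hle hB
  exact le_antisymm (hle.trans_eq hB) hAB.1

omit [IsFiniteMeasure μ] in
lemma stronglyMeasurable_condProb_div :
    StronglyMeasurable[G] fun x => (μ⟦A | G⟧) x / (μ⟦B | G⟧) x :=
  stronglyMeasurable_condExp.div stronglyMeasurable_condExp

lemma integrable_comp_condProb_inter_div (hφ : Continuous φ) (hG : G ≤ m0)
    (hA : MeasurableSet A) (hB : MeasurableSet B) :
    Integrable (fun x => φ ((μ⟦A ∩ B | G⟧) x / (μ⟦B | G⟧) x)) μ :=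
  integrable_comp_of_mem_Icc hφ (stronglyMeasurable_condProb_div.mono hG).aestronglyMeasurable
    (condProb_inter_div_mem_Icc hG hA hB)

lemma setIntegral_condProb_inter_div (hG : G ≤ m0) (hA : MeasurableSet A) (hB : MeasurableSet B)
    (hC : MeasurableSet[G] C) :
    ∫ x in C ∩ B, (μ⟦A ∩ B | G⟧) x / (μ⟦B | G⟧) x ∂μ = μ.real (C ∩ B ∩ A) :=
  calc ∫ x in C ∩ B, (μ⟦A ∩ B | G⟧) x / (μ⟦B | G⟧) x ∂μ
      = ∫ x in C, (μ⟦B | G⟧) x * ((μ⟦A ∩ B | G⟧) x / (μ⟦B | G⟧) x) ∂μ :=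
        setIntegral_inter_eq_setIntegral_condProb_mul hG hB hC stronglyMeasurable_condProb_div
          (integrable_comp_condProb_inter_div continuous_id hG hA hB)
    _ = ∫ x in C, (μ⟦A ∩ B | G⟧) x ∂μ := by
        refine integral_congr_ae (ae_restrict_of_ae ?_)
        filter_upwards [condProb_inter_eq_zero hG hA hB] with x hx
        exact mul_div_cancel_of_imp' hx
    _ = μ.real (C ∩ B ∩ A) := by
        rw [setIntegral_condExp hG (integrable_indicator_one (hA.inter hB)) hC,
          setIntegral_indicator (hA.inter hB), setIntegral_const, smul_eq_mul, mul_one,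
          inter_comm A, inter_assoc]

lemma condProb_eq_div_on (hGH : G ≤ H) (hH : H ≤ m0) (hA : MeasurableSet A)
    (hB : MeasurableSet[H] B)
    (htrace : ∀ D, MeasurableSet[H] D → ∃ C, MeasurableSet[G] C ∧ B ∩ D = B ∩ C) :
    ∀ᵐ x ∂μ, x ∈ B → (μ⟦A | H⟧) x = (μ⟦A ∩ B | G⟧) x / (μ⟦B | G⟧) x := by
  have hG := hGH.trans hH
  have hBm := hH _ hB
  have hAB : MeasurableSet (A ∩ B) := hA.inter hBm
  have hcond : B.indicator (fun x => (μ⟦A ∩ B | G⟧) x / (μ⟦B | G⟧) x) =ᵐ[μ] μ⟦A ∩ B | H⟧ := by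
    refine ae_eq_condExp_of_forall_setIntegral_eq hH (integrable_indicator_one hAB) (fun _ _ _ =>
      ((integrable_comp_condProb_inter_div continuous_id hG hA hBm).indicator hBm).integrableOn)
      (fun D hD _ => ?_)
      ((stronglyMeasurable_condProb_div.mono hGH).indicator hB).aestronglyMeasurable
    obtain ⟨C, hC, hDC⟩ := htrace D hD
    rw [inter_comm, inter_comm B] at hDC
    rw [setIntegral_indicator hBm, hDC, setIntegral_condProb_inter_div hG hA hBm hC, ← hDC,
      setIntegral_indicator hAB, setIntegral_const, smul_eq_mul, mul_one, inter_comm A, inter_assoc]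
  have hind : μ⟦A ∩ B | H⟧ =ᵐ[μ] B.indicator (μ⟦A | H⟧) := by
    rw [inter_comm, ← indicator_indicator]
    exact condExp_indicator (integrable_indicator_one hA) hB
  filter_upwards [hcond, hind] with x h₁ h₂ hx
  simpa only [h₂, indicator_of_mem hx, eq_comm] using h₁

end CondProb

section CondEntropy

variable {X α β : Type*} {G G' : MeasurableSpace X} [m0 : MeasurableSpace X] {μ : Measure X}
  [IsFiniteMeasure μ] [Fintype α] {A : Set X} {p : X → α} {q : X → β}

lemma integral_negMulLog_condProb_nonneg (hG : G ≤ m0) (hA : MeasurableSet A) :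
    0 ≤ ∫ x, Real.negMulLog ((μ⟦A | G⟧) x) ∂μ :=
  integral_nonneg_of_ae <| (condProb_mem_Icc hG hA).mono fun _ hx =>
    Real.negMulLog_nonneg hx.1 hx.2

lemma condPartEntropy_nonneg (hG : G ≤ m0) (hp : σ(p) ≤ m0) : 0 ≤ condPartEntropy μ G p :=
  Finset.sum_nonneg fun i _ => integral_negMulLog_condProb_nonneg hG (comap_top_le_iff.mp hp i)

lemma condPartEntropy_anti (hGG' : G ≤ G') (hG' : G' ≤ m0) (hp : σ(p) ≤ m0) :
    condPartEntropy μ G' p ≤ condPartEntropy μ G p := by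
  refine Finset.sum_le_sum fun i _ => ?_
  have hG := hGG'.trans hG'
  have hi := comap_top_le_iff.mp hp i
  have hint := integrable_comp_condProb (μ := μ) Real.continuous_negMulLog hG' hi
  have jensen : μ[Real.negMulLog ∘ μ⟦p ⁻¹' {i} | G'⟧ | G] ≤ᵐ[μ]
      Real.negMulLog ∘ μ[μ⟦p ⁻¹' {i} | G'⟧ | G] :=
    Real.concaveOn_negMulLog.condExp_map_le hG
      Real.continuous_negMulLog.continuousOn.upperSemicontinuousOn
      ((condProb_mem_Icc hG' hi).mono fun _ hx => hx.1) isClosed_Ici integrable_condExp hint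
  have hle : μ[Real.negMulLog ∘ μ⟦p ⁻¹' {i} | G'⟧ | G] ≤ᵐ[μ]
      fun x => Real.negMulLog ((μ⟦p ⁻¹' {i} | G⟧) x) := by
    filter_upwards [jensen, condExp_condExp_of_le (f := (p ⁻¹' {i}).indicator fun _ => (1 : ℝ))
      hGG' hG'] with x hx htower
    simpa only [Function.comp_apply, htower] using hx
  exact (integral_condExp hG).symm.trans_le (integral_mono_ae integrable_condExp
    (integrable_comp_condProb Real.continuous_negMulLog hG hi) hle)

lemma ae_eq_set_of_condProb_ae_eq_indicator {B : Set X} (hG : G ≤ m0) (hA : MeasurableSet A)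
    (hB : MeasurableSet[G] B) (h : μ⟦A | G⟧ =ᵐ[μ] B.indicator fun _ => 1) : A =ᵐ[μ] B := by
  have hreal : ∀ C, MeasurableSet[G] C → μ.real (C ∩ A) = μ.real (C ∩ B) := fun C hC =>
    calc μ.real (C ∩ A) = ∫ x in C, (μ⟦A | G⟧) x ∂μ := by
          rw [setIntegral_condExp hG (integrable_indicator_one hA) hC, setIntegral_indicator hA,
            setIntegral_const, smul_eq_mul, mul_one]
      _ = ∫ x in C, B.indicator (fun _ => (1 : ℝ)) x ∂μ := integral_congr_ae (ae_restrict_of_ae h)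
      _ = μ.real (C ∩ B) := by
          rw [setIntegral_indicator (hG _ hB), setIntegral_const, smul_eq_mul, mul_one]
  have hdiff := hreal Bᶜ hB.compl
  have hinter := hreal B hB
  rw [compl_inter_self, measureReal_empty, measureReal_eq_zero_iff] at hdiff
  rw [inter_self, ← measureReal_inter_add_sdiff (s := B) hA, left_eq_add,
    measureReal_eq_zero_iff] at hinter
  exact ae_eq_set.mpr ⟨by rwa [sdiff_eq, inter_comm], hinter⟩

lemma integral_negMulLog_condProb_eq_zero_iff (hG : G ≤ m0) (hA : MeasurableSet A) :
    ∫ x, Real.negMulLog ((μ⟦A | G⟧) x) ∂μ = 0 ↔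
      MeasurableSet[eventuallyMeasurableSpace G (ae μ)] A := by
  constructor
  · intro h
    have hnonneg : 0 ≤ᵐ[μ] fun x => Real.negMulLog ((μ⟦A | G⟧) x) :=
      (condProb_mem_Icc hG hA).mono fun _ hx => Real.negMulLog_nonneg hx.1 hx.2
    have hzero := (integral_eq_zero_iff_of_nonneg_ae hnonneg
      (integrable_comp_condProb Real.continuous_negMulLog hG hA)).mp h
    have hB : MeasurableSet[G] (μ⟦A | G⟧ ⁻¹' {1}) :=
      stronglyMeasurable_condExp.measurable (measurableSet_singleton 1)
    refine ⟨_, hB, ae_eq_set_of_condProb_ae_eq_indicator hG hA hB ?_⟩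
    filter_upwards [condProb_mem_Icc hG hA, hzero] with x hx hx0
    simp only [indicator_apply, mem_preimage, mem_singleton_iff]
    split_ifs with h1
    · exact h1
    · by_contra hne
      rw [Real.negMulLog_eq_neg] at hx0
      exact (Real.mul_log_neg (hx.1.lt_of_ne' hne) (hx.2.lt_of_ne h1)).ne (neg_eq_zero.mp hx0)
  · rintro ⟨B, hB, hAB⟩
    have hcond : μ⟦A | G⟧ =ᵐ[μ] B.indicator fun _ => (1 : ℝ) := by
      refine (condExp_congr_ae (indicator_ae_eq_of_ae_eq_set hAB)).trans ?_
      rw [condExp_of_stronglyMeasurable hG (stronglyMeasurable_const.indicator hB)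
        (integrable_indicator_one (hG _ hB))]
    refine integral_eq_zero_of_ae (hcond.mono fun x hx => ?_)
    by_cases hxB : x ∈ B <;> simp [hx, hxB]

lemma condPartEntropy_eq_zero_iff (hG : G ≤ m0) (hp : σ(p) ≤ m0) :
    condPartEntropy μ G p = 0 ↔ SubModNull μ σ(p) G := by
  have hpm := comap_top_le_iff.mp hp
  rw [subModNull_iff_le, comap_top_le_iff, condPartEntropy, Finset.sum_eq_zero_iff_of_nonneg
    fun i _ => integral_negMulLog_condProb_nonneg hG (hpm i)]
  simp only [Finset.mem_univ, true_imp_iff, integral_negMulLog_condProb_eq_zero_iff hG (hpm _)]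

lemma mul_negMulLog_div {v w : ℝ} (h : v = 0 → w = 0) :
    v * Real.negMulLog (w / v) = Real.negMulLog w + w * Real.log v := by
  rcases eq_or_ne w 0 with rfl | hw
  · simp
  have hv : v ≠ 0 := mt h hw
  rw [Real.negMulLog, Real.negMulLog, Real.log_div hw hv]
  field_simp
  ring

lemma sum_condProb_inter_fiber (hp : σ(p) ≤ m0) {B : Set X} (hB : MeasurableSet B) :
    ∀ᵐ x ∂μ, ∑ i, (μ⟦p ⁻¹' {i} ∩ B | G⟧) x = (μ⟦B | G⟧) x := by
  have hsum : (∑ i, (p ⁻¹' {i} ∩ B).indicator fun _ => (1 : ℝ)) = B.indicator fun _ => 1 := by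
    ext x
    by_cases hx : x ∈ B <;> simp [indicator_apply, hx]
  have h := condExp_finsetSum (s := Finset.univ)
    (fun i _ => integrable_indicator_one (μ := μ) ((comap_top_le_iff.mp hp i).inter hB)) G
  rw [hsum] at h
  filter_upwards [h] with x hx
  rw [hx, Finset.sum_apply]

lemma setIntegral_fiber_negMulLog_condProb_sup [Countable β] (hG : G ≤ m0) (hA : MeasurableSet A)
    (hq : σ(q) ≤ m0) (j : β) :
    ∫ x in q ⁻¹' {j}, Real.negMulLog ((μ⟦A | σ(q) ⊔ G⟧) x) ∂μ =
      ∫ x, (μ⟦q ⁻¹' {j} | G⟧) x *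
        Real.negMulLog ((μ⟦A ∩ q ⁻¹' {j} | G⟧) x / (μ⟦q ⁻¹' {j} | G⟧) x) ∂μ := by
  set B := q ⁻¹' {j}
  have hB : MeasurableSet B := comap_top_le_iff.mp hq j
  calc ∫ x in B, Real.negMulLog ((μ⟦A | σ(q) ⊔ G⟧) x) ∂μ
      = ∫ x in univ ∩ B, Real.negMulLog ((μ⟦A ∩ B | G⟧) x / (μ⟦B | G⟧) x) ∂μ := by
        rw [univ_inter]
        refine setIntegral_congr_ae hB ?_
        filter_upwards [condProb_eq_div_on (μ := μ) le_sup_right (sup_le hq hG) hA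
          (comap_top_le_iff.mp le_sup_left j)
          fun D hD => exists_inter_eq_of_measurableSet_sup_comap_top hD j] with x hx hxB
        rw [hx hxB]
    _ = ∫ x, (μ⟦B | G⟧) x * Real.negMulLog ((μ⟦A ∩ B | G⟧) x / (μ⟦B | G⟧) x) ∂μ := by
        rw [setIntegral_inter_eq_setIntegral_condProb_mul hG hB .univ
          (Real.continuous_negMulLog.comp_stronglyMeasurable stronglyMeasurable_condProb_div)
          (integrable_comp_condProb_inter_div Real.continuous_negMulLog hG hA hB),
          setIntegral_univ]

lemma setIntegral_fiber_condPartEntropy_sup [Countable β] (hG : G ≤ m0) (hp : σ(p) ≤ m0)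
    (hq : σ(q) ≤ m0) (j : β) :
    ∑ i, ∫ x in q ⁻¹' {j}, Real.negMulLog ((μ⟦p ⁻¹' {i} | σ(q) ⊔ G⟧) x) ∂μ =
      ∑ i, ∫ x, Real.negMulLog ((μ⟦p ⁻¹' {i} ∩ q ⁻¹' {j} | G⟧) x) ∂μ -
        ∫ x, Real.negMulLog ((μ⟦q ⁻¹' {j} | G⟧) x) ∂μ := by
  have hB : MeasurableSet (q ⁻¹' {j}) := comap_top_le_iff.mp hq j
  have hpm := comap_top_le_iff.mp hp
  have hint : ∀ {A : Set X}, MeasurableSet A →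
      Integrable (fun x => Real.negMulLog ((μ⟦A | G⟧) x)) μ :=
    integrable_comp_condProb Real.continuous_negMulLog hG
  have hint_div : ∀ i, Integrable (fun x => (μ⟦q ⁻¹' {j} | G⟧) x *
      Real.negMulLog ((μ⟦p ⁻¹' {i} ∩ q ⁻¹' {j} | G⟧) x / (μ⟦q ⁻¹' {j} | G⟧) x)) μ := fun i =>
    (integrable_comp_condProb_inter_div Real.continuous_negMulLog hG (hpm i) hB).bdd_mul
      integrable_condExp.aestronglyMeasurable ((condProb_mem_Icc hG hB).mono fun x hx => by
        rw [Real.norm_of_nonneg hx.1]; exact hx.2)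
  simp only [setIntegral_fiber_negMulLog_condProb_sup hG (hpm _) hq]
  rw [← integral_finsetSum _ fun i _ => hint_div i,
    ← integral_finsetSum _ fun i _ => hint ((hpm i).inter hB),
    ← integral_sub (integrable_finsetSum _ fun i _ => hint ((hpm i).inter hB)) (hint hB)]
  refine integral_congr_ae ?_
  filter_upwards [sum_condProb_inter_fiber (G := G) hp hB,
    ae_all_iff.mpr fun i => condProb_inter_eq_zero hG (hpm i) hB] with x hsum hzero
  simp only [mul_negMulLog_div (hzero _), Finset.sum_add_distrib, ← Finset.sum_mul, hsum]
  simp only [Real.negMulLog, neg_mul, sub_neg_eq_add]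

theorem condPartEntropy_pair [Fintype β] (hG : G ≤ m0) (hp : σ(p) ≤ m0) (hq : σ(q) ≤ m0) :
    condPartEntropy μ G (fun x => (p x, q x)) =
      condPartEntropy μ G q + condPartEntropy μ (σ(q) ⊔ G) p := by
  have hfibers : ⋃ j, q ⁻¹' {j} = univ := iUnion_eq_univ_iff.mpr fun x => ⟨q x, rfl⟩
  have hsplit : ∀ i, ∫ x, Real.negMulLog ((μ⟦p ⁻¹' {i} | σ(q) ⊔ G⟧) x) ∂μ =
      ∑ j, ∫ x in q ⁻¹' {j}, Real.negMulLog ((μ⟦p ⁻¹' {i} | σ(q) ⊔ G⟧) x) ∂μ := fun i => by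
    rw [← setIntegral_univ, ← hfibers, integral_iUnion_fintype (comap_top_le_iff.mp hq)
      (fun j k hjk => (disjoint_singleton.mpr hjk).preimage q) fun j =>
      (integrable_comp_condProb Real.continuous_negMulLog (sup_le hq hG)
        (comap_top_le_iff.mp hp i)).integrableOn]
  have hpair : ∀ i j, (fun x => (p x, q x)) ⁻¹' {(i, j)} = p ⁻¹' {i} ∩ q ⁻¹' {j} := fun i j => by
    ext x; simp
  simp only [condPartEntropy, Fintype.sum_prod_type_right, hpair, hsplit]
  rw [Finset.sum_comm (s := (Finset.univ : Finset α))]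
  simp only [setIntegral_fiber_condPartEntropy_sup hG hp hq, Finset.sum_sub_distrib]
  ring

end CondEntropy

section CondEntropyComparison

variable {X Y α β : Type*} {G : MeasurableSpace X} {G' : MeasurableSpace Y}
  [m0 : MeasurableSpace X] [mY : MeasurableSpace Y]
  {μ : Measure X} [IsFiniteMeasure μ] {ν : Measure Y} [Fintype α] [Fintype β]
  {p : X → α} {q : X → β}

omit [IsFiniteMeasure μ] in
lemma condPartEntropy_pair_swap (p : X → α) (q : X → β) :
    condPartEntropy μ G (fun x => (p x, q x)) = condPartEntropy μ G (fun x => (q x, p x)) := by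
  refine Fintype.sum_equiv (Equiv.prodComm α β) _ _ fun ij => ?_
  have hfiber : (fun x => (p x, q x)) ⁻¹' {ij} = (fun x => (q x, p x)) ⁻¹' {ij.swap} := by
    ext x; simp [Prod.ext_iff, and_comm]
  rw [hfiber, Equiv.prodComm_apply]

lemma condPartEntropy_add_comm (hG : G ≤ m0) (hp : σ(p) ≤ m0) (hq : σ(q) ≤ m0) :
    condPartEntropy μ G q + condPartEntropy μ (σ(q) ⊔ G) p =
      condPartEntropy μ G p + condPartEntropy μ (σ(p) ⊔ G) q := by
  rw [← condPartEntropy_pair hG hp hq, ← condPartEntropy_pair hG hq hp, condPartEntropy_pair_swap]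

lemma condPartEntropy_le_of_comap_le (hG : G ≤ m0) (hq : σ(q) ≤ m0) (hpq : σ(p) ≤ σ(q)) :
    condPartEntropy μ G p ≤ condPartEntropy μ G q := by
  have hp := hpq.trans hq
  have hpqG : σ(p) ≤ σ(q) ⊔ G := hpq.trans le_sup_left
  have hzero : condPartEntropy μ (σ(q) ⊔ G) p = 0 :=
    (condPartEntropy_eq_zero_iff (sup_le hq hG) hp).mpr fun A hA => ⟨A, hpqG A hA, by simp⟩
  have hchain := condPartEntropy_add_comm (μ := μ) hG hp hq
  rw [hzero, add_zero] at hchain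
  rw [hchain]
  exact le_add_of_nonneg_right (condPartEntropy_nonneg (sup_le hp hG) hq)

lemma condPartEntropy_congr (hG : G ≤ m0) (hq : σ(q) ≤ m0) (hpq : σ(p) = σ(q)) :
    condPartEntropy μ G p = condPartEntropy μ G q :=
  (condPartEntropy_le_of_comap_le hG hq hpq.le).antisymm
    (condPartEntropy_le_of_comap_le hG (hpq.trans_le hq) hpq.ge)

lemma condExp_comp_measurePreserving {R : X → Y} (hR : MeasurePreserving R μ ν)
    (hG' : G' ≤ mY) {f : Y → ℝ} (hf : Integrable f ν) :
    μ[f ∘ R | MeasurableSpace.comap R G'] =ᵐ[μ] ν[f | G'] ∘ R := by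
  have : IsFiniteMeasure ν := hR.map_eq ▸ inferInstance
  have hint : Integrable (ν[f | G'] ∘ R) μ := hR.integrable_comp_of_integrable integrable_condExp
  have hcomap : MeasurableSpace.comap R G' ≤ m0 :=
    (MeasurableSpace.comap_mono hG').trans hR.measurable.comap_le
  have hset : ∀ {C : Set Y} {g : Y → ℝ}, MeasurableSet C → Integrable g ν →
      ∫ x in R ⁻¹' C, g (R x) ∂μ = ∫ y in C, g y ∂ν := fun hC hg => by
    rw [← hR.map_eq, setIntegral_map hC (hR.map_eq ▸ hg.aestronglyMeasurable) hR.aemeasurable]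
  refine (ae_eq_condExp_of_forall_setIntegral_eq hcomap (hR.integrable_comp_of_integrable hf)
    (fun _ _ _ => hint.integrableOn) ?_ ?_).symm
  · rintro _ ⟨C, hC, rfl⟩ -
    simp only [Function.comp_apply]
    rw [hset (hG' _ hC) integrable_condExp, hset (hG' _ hC) hf, setIntegral_condExp hG' hf hC]
  · exact (stronglyMeasurable_condExp.comp_measurable (comap_measurable R)).aestronglyMeasurable

lemma condPartEntropy_comp_measurePreserving {R : X → Y} (hR : MeasurePreserving R μ ν)
    (hG' : G' ≤ mY) {p : Y → α} (hp : σ(p) ≤ mY) :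
    condPartEntropy μ (MeasurableSpace.comap R G') (fun x => p (R x)) = condPartEntropy ν G' p := by
  have : IsFiniteMeasure ν := hR.map_eq ▸ inferInstance
  refine Finset.sum_congr rfl fun i _ => ?_
  have hcond := condExp_comp_measurePreserving hR hG'
    (integrable_indicator_one (comap_top_le_iff.mp hp i))
  calc ∫ x, Real.negMulLog ((μ⟦(fun x => p (R x)) ⁻¹' {i} | MeasurableSpace.comap R G'⟧) x) ∂μ
      = ∫ x, Real.negMulLog ((ν⟦p ⁻¹' {i} | G'⟧) (R x)) ∂μ :=
        integral_congr_ae (hcond.mono fun x hx => congrArg Real.negMulLog hx)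
    _ = ∫ y, Real.negMulLog ((ν⟦p ⁻¹' {i} | G'⟧) y) ∂ν := by
        rw [← hR.map_eq, integral_map hR.aemeasurable]
        exact Real.continuous_negMulLog.comp_aestronglyMeasurable
          integrable_condExp.aestronglyMeasurable

lemma tendsto_condPartEntropy_iSup {G : ℕ → MeasurableSpace X} (hmono : Monotone G)
    (hG : ∀ n, G n ≤ m0) (hp : σ(p) ≤ m0) :
    Tendsto (fun n => condPartEntropy μ (G n) p) atTop (𝓝 (condPartEntropy μ (⨆ n, G n) p)) := by
  refine tendsto_finsetSum _ fun i _ => ?_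
  obtain ⟨K, hK⟩ := isCompact_Icc.exists_bound_of_continuousOn
    (Real.continuous_negMulLog.continuousOn (s := Icc 0 1))
  refine tendsto_integral_of_dominated_convergence (fun _ => K)
    (fun n => Real.continuous_negMulLog.comp_aestronglyMeasurable
      integrable_condExp.aestronglyMeasurable) (integrable_const K)
    (fun n => (condProb_mem_Icc (hG n) (comap_top_le_iff.mp hp i)).mono fun x hx => hK _ hx) ?_
  filter_upwards [tendsto_ae_condExp (ℱ := ⟨G, hmono, hG⟩) ((p ⁻¹' {i}).indicator fun _ => (1 : ℝ))]
    with x hx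
  exact (Real.continuous_negMulLog.tendsto _).comp hx

end CondEntropyComparison

section Dynamics

variable {X α β : Type*} {F F' : MeasurableSpace X} {T S : X → X}

lemma pastAlg_mono (h : F ≤ F') : pastAlg T F ≤ pastAlg T F' :=
  iSup_mono fun _ => MeasurableSpace.comap_mono h

lemma pastAlg_iSup {ι : Sort*} (G : ι → MeasurableSpace X) :
    pastAlg T (⨆ i, G i) = ⨆ i, pastAlg T (G i) := by
  simp only [pastAlg, MeasurableSpace.comap_iSup]
  exact iSup_comm

lemma partPast_eq_pastAlg (T : X → X) (p : X → α) : partPast T p = pastAlg T σ(p) := by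
  simp only [pastAlg, MeasurableSpace.comap_comp]
  rfl

lemma sup_pastAlg_eq_iSup (T : X → X) (F : MeasurableSpace X) :
    F ⊔ pastAlg T F = ⨆ n : ℕ, MeasurableSpace.comap T^[n] F := by
  rw [← sup_iSup_nat_succ, Function.iterate_zero, MeasurableSpace.comap_id]
  rfl

lemma comap_pastAlg_of_leftInverse (hTS : Function.LeftInverse T S) :
    MeasurableSpace.comap S (pastAlg T F) = F ⊔ pastAlg T F := by
  rw [sup_pastAlg_eq_iSup, pastAlg, MeasurableSpace.comap_iSup]
  refine iSup_congr fun n => ?_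
  rw [MeasurableSpace.comap_comp, Function.iterate_succ, Function.comp_assoc, hTS.comp_eq_id,
    Function.comp_id]

lemma monotone_comap_iterate_pastAlg (hTS : Function.LeftInverse T S) :
    Monotone fun k => MeasurableSpace.comap S^[k] (pastAlg T F) := by
  refine monotone_nat_of_le_succ fun k => ?_
  rw [Function.iterate_succ', ← MeasurableSpace.comap_comp, comap_pastAlg_of_leftInverse hTS]
  exact MeasurableSpace.comap_mono le_sup_right

lemma hullAlg_le_iSup_comap_pastAlg (hTS : Function.LeftInverse T S) :
    hullAlg T S F ≤ ⨆ k, MeasurableSpace.comap S^[k] (pastAlg T F) := by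
  have hF : F ≤ MeasurableSpace.comap S (pastAlg T F) :=
    le_sup_left.trans_eq (comap_pastAlg_of_leftInverse hTS).symm
  refine iSup_le fun n => sup_le ?_ ?_
  · refine (le_iSup (fun n => MeasurableSpace.comap T^[n] F) n).trans ?_
    rw [← sup_pastAlg_eq_iSup, ← comap_pastAlg_of_leftInverse hTS]
    exact le_iSup_of_le 1 le_rfl
  · refine le_iSup_of_le (n + 1) ?_
    rw [Function.iterate_succ', ← MeasurableSpace.comap_comp]
    exact MeasurableSpace.comap_mono hF

lemma iSup_comap_iterate_pastAlg (T S : X → X) (F : MeasurableSpace X) :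
    ⨆ k, MeasurableSpace.comap S^[k] (pastAlg T F) =
      ⨆ kn : ℕ × ℕ, MeasurableSpace.comap (T^[kn.2 + 1] ∘ S^[kn.1]) F := by
  simp only [pastAlg, MeasurableSpace.comap_iSup, MeasurableSpace.comap_comp, iSup_prod]

lemma pastAlg_le {m0 : MeasurableSpace X} (hT : Measurable T) (hF : F ≤ m0) : pastAlg T F ≤ m0 :=
  iSup_le fun n => (MeasurableSpace.comap_mono hF).trans (hT.iterate (n + 1)).comap_le

lemma pinskerAlg_le [m0 : MeasurableSpace X] {μ : Measure X} : pinskerAlg μ T ≤ m0 :=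
  iSup_le fun _ => iSup_le fun _ => iSup_le fun hp => iSup_le fun _ => hp.comap_le

/-- The join of the first `n` partitions of the sequence `z`, with the tuple of cells as value. -/
def initialJoin (z : ℕ → X → α) (n : ℕ) (x : X) (i : Fin n) : α := z i x

section initialJoin

variable [Countable α] (z : ℕ → X → α)

lemma comap_initialJoin (n : ℕ) : σ(initialJoin z n) = ⨆ i : Fin n, σ(z i) :=
  comap_top_tuple fun i : Fin n => z i

lemma monotone_comap_initialJoin : Monotone fun n => σ(initialJoin z n) := fun m n hmn => by
  simp only [comap_initialJoin]
  exact iSup_le fun i => le_iSup (fun i : Fin n => σ(z i)) (i.castLE hmn)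

lemma iSup_comap_initialJoin : ⨆ n, σ(initialJoin z n) = ⨆ i, σ(z i) := by
  simp only [comap_initialJoin]
  exact le_antisymm (iSup_le fun n => iSup_le fun i => le_iSup (fun i => σ(z i)) i)
    (iSup_le fun i => le_iSup_of_le (i + 1)
      (le_iSup (fun j : Fin (i + 1) => σ(z j)) (Fin.last i)))

end initialJoin

/-- The join `T⁻¹Q ∨ ⋯ ∨ T⁻ⁿQ` of the first `n` past translates of the partition `Q` given by
`q`. -/
def pastJoin (T : X → X) (q : X → α) (n : ℕ) : X → Fin n → α :=
  initialJoin (fun i x => q (T^[i + 1] x)) n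

section pastJoin

variable [Countable α]

lemma comap_pastJoin (T : X → X) (q : X → α) (n : ℕ) :
    σ(pastJoin T q n) = ⨆ i : Fin n, MeasurableSpace.comap T^[i + 1] σ(q) := by
  simp only [MeasurableSpace.comap_comp]
  exact comap_initialJoin _ n

lemma monotone_comap_pastJoin (T : X → X) (q : X → α) : Monotone fun n => σ(pastJoin T q n) :=
  monotone_comap_initialJoin _

lemma iSup_comap_pastJoin (T : X → X) (q : X → α) : ⨆ n, σ(pastJoin T q n) = pastAlg T σ(q) :=
  (iSup_comap_initialJoin _).trans (partPast_eq_pastAlg T q)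

lemma comap_pastJoin_mono [Countable β] {p : X → α} {q : X → β} (h : σ(p) ≤ σ(q)) (n : ℕ) :
    σ(pastJoin T p n) ≤ σ(pastJoin T q n) := by
  simp only [comap_pastJoin]
  exact iSup_mono fun _ => MeasurableSpace.comap_mono h

lemma comap_pastJoin_le {m0 : MeasurableSpace X} {q : X → α} (hT : Measurable T) (hq : σ(q) ≤ m0)
    (n : ℕ) : σ(pastJoin T q n) ≤ m0 :=
  (le_iSup (fun n => σ(pastJoin T q n)) n).trans <|
    (iSup_comap_pastJoin T q).trans_le (pastAlg_le hT hq)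

end pastJoin

lemma comap_pastJoin_succ (T : X → X) (q : X → α) (n : ℕ) :
    σ(pastJoin T q (n + 1)) = σ(fun x => (q (T x), pastJoin T q n (T x))) := by
  have hcons : pastJoin T q (n + 1) = fun x => Fin.cons (q (T x)) (pastJoin T q n (T x)) :=
    funext fun x => funext fun i => Fin.cases rfl (fun _ => rfl) i
  have hsplit : (fun x => (q (T x), pastJoin T q n (T x))) =
      fun x => (pastJoin T q (n + 1) x 0, Fin.tail (pastJoin T q (n + 1) x)) := rfl
  apply le_antisymm
  · rw [hcons]
    exact comap_top_comp_le (fun x => (q (T x), pastJoin T q n (T x)))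
      fun c => (Fin.cons c.1 c.2 : Fin (n + 1) → α)
  · rw [hsplit]
    exact comap_top_comp_le (pastJoin T q (n + 1)) fun c => (c 0, Fin.tail c)

end Dynamics

section KolmogorovSinai

variable {X α β : Type*} [m0 : MeasurableSpace X] {μ : Measure X}
  [IsFiniteMeasure μ] {T : X → X} [Fintype α] [Fintype β] {p : X → α} {q : X → β}

lemma condPartEntropy_bot_pastJoin_succ (hT : MeasurePreserving T μ μ) (hq : σ(q) ≤ m0) (n : ℕ) :
    condPartEntropy μ ⊥ (pastJoin T q (n + 1)) =
      condPartEntropy μ ⊥ (pastJoin T q n) + condPartEntropy μ σ(pastJoin T q n) q := by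
  have hjoin := comap_pastJoin_le hT.measurable hq n
  have hpair : σ(fun x => (q x, pastJoin T q n x)) ≤ m0 :=
    (comap_top_pair _ _).trans_le (sup_le hq hjoin)
  have hinv := condPartEntropy_comp_measurePreserving hT bot_le hpair
  rw [MeasurableSpace.comap_bot, condPartEntropy_pair bot_le hq hjoin, sup_bot_eq] at hinv
  rw [← hinv]
  exact condPartEntropy_congr bot_le
    ((comap_pastJoin_succ T q n).symm.trans_le (comap_pastJoin_le hT.measurable hq _))
    (comap_pastJoin_succ T q n)

lemma sum_condPartEntropy_pastJoin (hT : MeasurePreserving T μ μ) (hq : σ(q) ≤ m0) (n : ℕ) :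
    ∑ i ∈ Finset.range n, condPartEntropy μ σ(pastJoin T q i) q =
      condPartEntropy μ ⊥ (pastJoin T q n) := by
  induction n with
  | zero =>
    have htriv : σ(pastJoin T q 0) ≤ ⊥ := by rw [comap_pastJoin, iSup_of_empty]
    exact ((condPartEntropy_eq_zero_iff bot_le (htriv.trans bot_le)).mpr
      fun A hA => ⟨A, htriv A hA, by simp⟩).symm
  | succ n ih => rw [Finset.sum_range_succ, ih, condPartEntropy_bot_pastJoin_succ hT hq]

lemma tendsto_condPartEntropy_pastJoin (hT : Measurable T) (hq : σ(q) ≤ m0) :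
    Tendsto (fun n => condPartEntropy μ σ(pastJoin T q n) q) atTop (𝓝 (partKS μ T q)) := by
  rw [partKS, partPast_eq_pastAlg, ← iSup_comap_pastJoin]
  exact tendsto_condPartEntropy_iSup (monotone_comap_pastJoin T q) (comap_pastJoin_le hT hq) hq

-- `h(q, T)` is the Cesàro limit `lim H(T⁻¹q ∨ ⋯ ∨ T⁻ⁿq) / n`, and joins inherit refinement.
theorem partKS_le_of_comap_le (hT : MeasurePreserving T μ μ) (hq : σ(q) ≤ m0)
    (hpq : σ(p) ≤ σ(q)) : partKS μ T p ≤ partKS μ T q := by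
  have hp := hpq.trans hq
  refine le_of_tendsto_of_tendsto' (tendsto_condPartEntropy_pastJoin hT.measurable hp).cesaro
    (tendsto_condPartEntropy_pastJoin hT.measurable hq).cesaro fun n => ?_
  rw [sum_condPartEntropy_pastJoin hT hp, sum_condPartEntropy_pastJoin hT hq]
  exact mul_le_mul_of_nonneg_left (condPartEntropy_le_of_comap_le bot_le
    (comap_pastJoin_le hT.measurable hq n) (comap_pastJoin_mono hpq n)) (by positivity)

lemma partKS_le_condPartEntropy_sup (hT : MeasurePreserving T μ μ) (hp : σ(p) ≤ m0)
    (hq : σ(q) ≤ m0) (hzero : partKS μ T p = 0) :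
    partKS μ T q ≤ condPartEntropy μ (σ(p) ⊔ pastAlg T (σ(p) ⊔ σ(q))) q := by
  have hpq := comap_top_pair q p
  have hle := sup_le hq hp
  have hpast := pastAlg_le hT.measurable (sup_le hp hq)
  have hp_past : condPartEntropy μ (pastAlg T (σ(p) ⊔ σ(q))) p ≤ 0 := by
    rw [← hzero, partKS, partPast_eq_pastAlg]
    exact condPartEntropy_anti (pastAlg_mono le_sup_left) hpast hp
  calc partKS μ T q
      ≤ partKS μ T (fun x => (q x, p x)) :=
        partKS_le_of_comap_le hT (hpq.trans_le hle) (le_sup_left.trans_eq hpq.symm)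
    _ = condPartEntropy μ (pastAlg T (σ(p) ⊔ σ(q))) p +
          condPartEntropy μ (σ(p) ⊔ pastAlg T (σ(p) ⊔ σ(q))) q := by
        rw [partKS, partPast_eq_pastAlg, hpq, sup_comm σ(q), condPartEntropy_pair hpast hq hp]
    _ ≤ condPartEntropy μ (σ(p) ⊔ pastAlg T (σ(p) ⊔ σ(q))) q :=
        add_le_of_nonpos_left hp_past

end KolmogorovSinai

section ZeroEntropy

variable {X α β : Type*} {F : MeasurableSpace X} [m0 : MeasurableSpace X] {μ : Measure X}
  [IsFiniteMeasure μ] {T S : X → X} [Fintype α] [Finite β] {p : X → α} {q : X → β}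

lemma condPartEntropy_comp_iterate_pastAlg_le (hT : MeasurePreserving T μ μ) (hp : σ(p) ≤ m0)
    (hq : σ(q) ≤ m0) (hzero : partKS μ T p = 0) (k : ℕ) :
    condPartEntropy μ (pastAlg T σ(q)) (fun x => p (T^[k] x)) ≤
      condPartEntropy μ (σ(q) ⊔ pastAlg T σ(q)) (fun x => p (T^[k] x)) := by
  have := Fintype.ofFinite β
  have hpk_le : σ(fun x => p (T^[k] x)) ≤ σ(p) ⊔ pastAlg T σ(p) := by
    rw [sup_pastAlg_eq_iSup]
    refine le_iSup_of_le k ?_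
    rw [MeasurableSpace.comap_comp]
    rfl
  have hpk : σ(fun x => p (T^[k] x)) ≤ m0 :=
    hpk_le.trans (sup_le hp (pastAlg_le hT.measurable hp))
  have hpast := pastAlg_le hT.measurable hq
  have hcoarser : σ(fun x => p (T^[k] x)) ⊔ pastAlg T σ(q) ≤
      σ(p) ⊔ pastAlg T (σ(p) ⊔ σ(q)) :=
    sup_le (hpk_le.trans (sup_le_sup_left (pastAlg_mono le_sup_left) _))
      ((pastAlg_mono le_sup_right).trans le_sup_right)
  have hq_le : condPartEntropy μ (pastAlg T σ(q)) q ≤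
      condPartEntropy μ (σ(fun x => p (T^[k] x)) ⊔ pastAlg T σ(q)) q :=
    calc condPartEntropy μ (pastAlg T σ(q)) q = partKS μ T q := by
          rw [partKS, partPast_eq_pastAlg]
      _ ≤ _ := partKS_le_condPartEntropy_sup hT hp hq hzero
      _ ≤ _ := condPartEntropy_anti hcoarser
          (sup_le hp (pastAlg_le hT.measurable (sup_le hp hq))) hq
  linarith [condPartEntropy_add_comm (μ := μ) hpast hpk hq]

lemma condPartEntropy_comap_iterate (hT : Measurable T) (hS : MeasurePreserving S μ μ)
    (hTS : Function.LeftInverse T S) (hF : F ≤ m0) (hp : σ(p) ≤ m0) (k : ℕ) :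
    condPartEntropy μ (MeasurableSpace.comap S^[k] F) p =
      condPartEntropy μ F (fun x => p (T^[k] x)) := by
  have hpk : σ(fun x => p (T^[k] x)) ≤ m0 := by
    rw [← Function.comp_def p, ← MeasurableSpace.comap_comp]
    exact (MeasurableSpace.comap_mono hp).trans (hT.iterate k).comap_le
  rw [← condPartEntropy_comp_measurePreserving (hS.iterate k) hF hpk]
  simp only [hTS.iterate k _]

lemma monotone_condPartEntropy_comap_iterate_pastAlg (hT : MeasurePreserving T μ μ)
    (hS : MeasurePreserving S μ μ) (hTS : Function.LeftInverse T S) (hp : σ(p) ≤ m0)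
    (hq : σ(q) ≤ m0) (hzero : partKS μ T p = 0) :
    Monotone fun k => condPartEntropy μ (MeasurableSpace.comap S^[k] (pastAlg T σ(q))) p := by
  refine monotone_nat_of_le_succ fun k => ?_
  have hpast := pastAlg_le hT.measurable hq
  rw [Function.iterate_succ', ← MeasurableSpace.comap_comp, comap_pastAlg_of_leftInverse hTS,
    condPartEntropy_comap_iterate hT.measurable hS hTS hpast hp,
    condPartEntropy_comap_iterate hT.measurable hS hTS (sup_le hq hpast) hp]
  exact condPartEntropy_comp_iterate_pastAlg_le hT hp hq hzero k

lemma condPartEntropy_pastAlg_le_comap_iterate {z : ℕ → X → β} (hT : MeasurePreserving T μ μ)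
    (hS : MeasurePreserving S μ μ) (hTS : Function.LeftInverse T S) (hp : σ(p) ≤ m0)
    (hz : ⨆ i, σ(z i) ≤ m0) (hzero : partKS μ T p = 0) (k : ℕ) :
    condPartEntropy μ (pastAlg T (⨆ i, σ(z i))) p ≤
      condPartEntropy μ (MeasurableSpace.comap S^[k] (pastAlg T (⨆ i, σ(z i)))) p := by
  have hjoin : ∀ n, σ(initialJoin z n) ≤ m0 := fun n =>
    (le_iSup (fun n => σ(initialJoin z n)) n).trans ((iSup_comap_initialJoin z).trans_le hz)
  have hlim : ∀ j, Tendsto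
      (fun n => condPartEntropy μ (MeasurableSpace.comap S^[j] (pastAlg T σ(initialJoin z n))) p)
      atTop (𝓝 (condPartEntropy μ
        (MeasurableSpace.comap S^[j] (pastAlg T (⨆ i, σ(z i)))) p)) := fun j => by
    rw [← iSup_comap_initialJoin, pastAlg_iSup, MeasurableSpace.comap_iSup]
    exact tendsto_condPartEntropy_iSup
      (fun m n h => MeasurableSpace.comap_mono (pastAlg_mono (monotone_comap_initialJoin z h)))
      (fun n => (MeasurableSpace.comap_mono (pastAlg_le hT.measurable (hjoin n))).trans
        (hS.measurable.iterate j).comap_le) hp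
  have hlim0 := hlim 0
  simp only [Function.iterate_zero, MeasurableSpace.comap_id] at hlim0
  refine le_of_tendsto_of_tendsto' hlim0 (hlim k) fun n => ?_
  have hmono :=
    monotone_condPartEntropy_comap_iterate_pastAlg hT hS hTS hp (hjoin n) hzero (Nat.zero_le k)
  simpa only [Function.iterate_zero, MeasurableSpace.comap_id] using hmono

end ZeroEntropy

section Generating

variable {X α : Type*} {F : MeasurableSpace X} [m0 : MeasurableSpace X] {μ : Measure X}
  [IsFiniteMeasure μ] {T S : X → X} [Fintype α] {p : X → α}

theorem subModNull_pastAlg_of_partKS_eq_zero (hT : MeasurePreserving T μ μ)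
    (hS : MeasurePreserving S μ μ) (hTS : Function.LeftInverse T S) (hF : F ≤ m0)
    (hp : σ(p) ≤ m0) (hzero : partKS μ T p = 0) (hgen : SubModNull μ σ(p) (hullAlg T S F)) :
    SubModNull μ σ(p) (pastAlg T F) := by
  have hgen' : SubModNull μ σ(p) (⨆ k, MeasurableSpace.comap S^[k] (pastAlg T F)) := fun A hA =>
    (hgen A hA).imp fun B hB => ⟨hullAlg_le_iSup_comap_pastAlg hTS B hB.1, hB.2⟩
  rw [iSup_comap_iterate_pastAlg] at hgen'
  obtain ⟨𝒞, h𝒞, h𝒞F, hp𝒞⟩ := exists_countable_subModNull_iSup_comap hgen'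
  obtain ⟨z, hz⟩ := exists_iSup_comap_top_eq_generateFrom h𝒞
  rw [← hz] at h𝒞F hp𝒞
  rw [← iSup_comap_iterate_pastAlg] at hp𝒞
  have hzm := h𝒞F.trans hF
  have hpast : ∀ k, MeasurableSpace.comap S^[k] (pastAlg T (⨆ i, σ(z i))) ≤ m0 := fun k =>
    (MeasurableSpace.comap_mono (pastAlg_le hT.measurable hzm)).trans
      (hS.measurable.iterate k).comap_le
  have hlim := tendsto_condPartEntropy_iSup (μ := μ) (monotone_comap_iterate_pastAlg hTS) hpast hp
  rw [(condPartEntropy_eq_zero_iff (iSup_le hpast) hp).mpr hp𝒞] at hlim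
  have hle : condPartEntropy μ (pastAlg T F) p ≤ 0 :=
    (condPartEntropy_anti (pastAlg_mono h𝒞F) (pastAlg_le hT.measurable hF) hp).trans <|
      ge_of_tendsto' hlim (condPartEntropy_pastAlg_le_comap_iterate hT hS hTS hp hzm hzero)
  have hFm := pastAlg_le hT.measurable hF
  exact (condPartEntropy_eq_zero_iff hFm hp).mp (hle.antisymm (condPartEntropy_nonneg hFm hp))

end Generating

theorem pinsker_subset_past_of_generating_general
    {X : Type*} (F : MeasurableSpace X) [m0 : MeasurableSpace X]
    (μ : Measure X) [IsFiniteMeasure μ]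
    (T : X ≃ᵐ X) (hT : MeasurePreserving (⇑T) μ μ)
    (hF : F ≤ m0)
    (hgen : SubModNull μ (pinskerAlg μ T) (hullAlg T T.symm F)) :
    SubModNull μ (pinskerAlg μ T) (pastAlg T F) := by
  refine subModNull_iff_le.mpr <| iSup_le fun k => iSup_le fun p => iSup_le fun hp =>
    iSup_le fun hzero => subModNull_iff_le.mp ?_
  have hp_le : σ(p) ≤ pinskerAlg μ T :=
    le_iSup_of_le k <| le_iSup_of_le p <| le_iSup_of_le hp <| le_iSup_of_le hzero le_rfl
  exact subModNull_pastAlg_of_partKS_eq_zero hT (hT.symm T) T.right_inv hF hp.comap_le hzero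
    fun A hA => hgen A (hp_le A hA)

/-- If `F` is a generating sub-σ-algebra of an invertible
measure-preserving system on a Lebesgue (standard Borel) probability space, i.e.
`⋁_{n ∈ ℤ} T^{-n}F = A` mod `μ`, then the Pinsker σ-algebra `Π_μ` is contained in
`F^- = ⋁_{n ≥ 1} T^{-n}F` mod `μ`. -/
theorem pinsker_subset_past_of_generating
    {X : Type*} (F : MeasurableSpace X) [m0 : MeasurableSpace X] [StandardBorelSpace X]
    (μ : Measure X) [IsProbabilityMeasure μ]
    (T : X ≃ᵐ X) (hT : MeasurePreserving (⇑T) μ μ)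
    (hF : F ≤ m0)
    (hgen : SubModNull μ m0
      (⨆ n : ℕ, MeasurableSpace.comap ((⇑T)^[n]) F ⊔
        MeasurableSpace.comap ((⇑T.symm)^[n]) F)) :
    SubModNull μ (pinskerAlg μ (⇑T)) (⨆ n : ℕ, MeasurableSpace.comap ((⇑T)^[n + 1]) F) :=
  pinsker_subset_past_of_generating_general F μ T hT hF fun A hA => hgen A (pinskerAlg_le A hA)
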